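/- arXiv:2603.25023 — 3 statements merged into one kernel-verified Lean document; each statement's English description precedes it below -/
import Mathlib

section
/- Let n ≥ 3 and let K be a complex matrix indexed by (Fin n × Fin n). Suppose that for every unitary U ∈ U(n), the matrix (U ⊗ conj(U)) · K · (U ⊗ conj(U))† is monomial, where ⊗ denotes the Kronecker product and conj(U) is the entrywise complex conjugate of U. Then there exists λ ∈ ℂ such that K = λ · I. -/
/-!
Read `K` as a linear map `Φ` on `n × n` matrices; conjugating `K` by `U ⊗ conj U` is conjugating
`Φ` by `X ↦ U X U†`. The proof shows that every rank-one projection is an eigenvector of `Φ`, and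
then that the eigenvalue is the same for all of them.

Monomiality says `Φ(Eᵢᵢ) = c Eₖₗ` for some `k, l`. If `k ≠ i`, then since `n ≥ 3` there is an
index `m ∉ {i, k}`, and a reflection in the `(k, m)`-plane fixes `Eᵢᵢ` but sends `Eₖₗ` to a matrix
with at least two nonzero entries, a contradiction; likewise for `l` (`diag_column`). Since the hypothesis is
invariant under conjugation, the same holds in every orthonormal basis, so `Φ(u u†) ∈ ℂ u u†`
for each unit vector `u`. Applying this to `u = (3 eᵢ - 4 b eⱼ) / 5` with `b = ±1, ±I` gives linear
equations (`eigen_eq`) that force `Φ` to act as a single scalar on `Eᵢᵢ, Eⱼⱼ, Eᵢⱼ`.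
-/

open scoped Matrix Kronecker

/-- A square complex matrix is monomial if it has exactly one nonzero entry in each row and
exactly one nonzero entry in each column. -/
def IsMonomial {m : Type*} [Fintype m] (M : Matrix m m ℂ) : Prop :=
  (∀ i, ∃! j, M i j ≠ 0) ∧ (∀ j, ∃! i, M i j ≠ 0)

namespace Stmt9

variable {n : ℕ}

/-! ### Conjugation action and reflections -/

/-- The matrix `U ⊗ conj U`, i.e. the map `X ↦ U X U†` in the basis of matrix units. -/
noncomputable def adj (U : Matrix (Fin n) (Fin n) ℂ) :
    Matrix (Fin n × Fin n) (Fin n × Fin n) ℂ :=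
  U ⊗ₖ U.map (starRingEnd ℂ)

lemma adj_apply (U : Matrix (Fin n) (Fin n) ℂ) (p q : Fin n × Fin n) :
    adj U p q = U p.1 q.1 * (starRingEnd ℂ) (U p.2 q.2) := rfl

lemma adj_mul (U W : Matrix (Fin n) (Fin n) ℂ) : adj (U * W) = adj U * adj W := by
  simp only [adj, Matrix.map_mul, Matrix.mul_kronecker_mul]

lemma adj_one : adj (1 : Matrix (Fin n) (Fin n) ℂ) = 1 := by
  simp [adj, Matrix.map_one]

lemma adj_conjTranspose (U : Matrix (Fin n) (Fin n) ℂ) : (adj U)ᴴ = adj Uᴴ := by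
  ext p q
  simp [adj_apply, Matrix.conjTranspose_apply]

/-- The vector `eᵢ + 2 b eⱼ`. -/
def wvec (i j : Fin n) (b : ℂ) : Fin n → ℂ :=
  fun k => (if k = i then 1 else 0) + 2 * b * (if k = j then 1 else 0)

/-- The reflection `1 - 2 w w† / ‖w‖²` along `w = eᵢ + 2 b eⱼ`, where `i ≠ j` and `|b| = 1`, so
that `‖w‖² = 5`. It maps `eᵢ` to `(3 eᵢ - 4 b eⱼ) / 5`. -/
noncomputable def refl (i j : Fin n) (b : ℂ) : Matrix (Fin n) (Fin n) ℂ :=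
  1 - (2 / 5 : ℂ) • Matrix.vecMulVec (wvec i j b) (star (wvec i j b))

lemma refl_apply (i j : Fin n) (b : ℂ) (k l : Fin n) :
    refl i j b k l = (if k = l then 1 else 0) -
      2 / 5 * (wvec i j b k * (starRingEnd ℂ) (wvec i j b l)) := by
  simp [refl, Matrix.vecMulVec_apply, Matrix.one_apply]

lemma refl_conjTranspose (i j : Fin n) (b : ℂ) : (refl i j b)ᴴ = refl i j b := by
  ext k l
  simp only [Matrix.conjTranspose_apply, refl_apply, eq_comm (a := l)]
  split_ifs <;> simp <;> ring

lemma wvec_dot {i j : Fin n} (hij : i ≠ j) {b : ℂ} (hb : (starRingEnd ℂ) b * b = 1) :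
    star (wvec i j b) ⬝ᵥ wvec i j b = 5 := by
  have h : ∀ k, star (wvec i j b) k * wvec i j b k =
      (if k = i then 1 else 0) + 4 * (if k = j then (1 : ℂ) else 0) := by
    intro k
    by_cases h1 : k = i
    · subst h1; simp [wvec, hij]
    · by_cases h2 : k = j
      · subst h2
        simp [wvec, h1]
        linear_combination 4 * hb
      · simp [wvec, h1, h2]
  simp only [dotProduct, h, Finset.sum_add_distrib, ← Finset.mul_sum]
  simp
  norm_num

lemma refl_mul_self {i j : Fin n} (hij : i ≠ j) {b : ℂ} (hb : (starRingEnd ℂ) b * b = 1) :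
    refl i j b * refl i j b = 1 := by
  have h : Matrix.vecMulVec (wvec i j b) (star (wvec i j b)) *
      Matrix.vecMulVec (wvec i j b) (star (wvec i j b)) =
      (5 : ℂ) • Matrix.vecMulVec (wvec i j b) (star (wvec i j b)) := by
    rw [Matrix.vecMulVec_mul_vecMulVec, wvec_dot hij hb]
    ext k l
    simp [Matrix.vecMulVec_apply]
    try ring1
  simp only [refl, sub_mul, mul_sub, one_mul, mul_one, smul_mul_assoc, mul_smul_comm, h, smul_smul]
  module

lemma refl_mem {i j : Fin n} (hij : i ≠ j) {b : ℂ} (hb : (starRingEnd ℂ) b * b = 1) :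
    refl i j b ∈ Matrix.unitaryGroup (Fin n) ℂ := by
  rw [Matrix.mem_unitaryGroup_iff, Matrix.star_eq_conjTranspose, refl_conjTranspose,
    refl_mul_self hij hb]

lemma refl_diag_ne_zero {i j : Fin n} (hij : i ≠ j) (k : Fin n) : refl i j 1 k k ≠ 0 := by
  rw [refl_apply]
  by_cases h1 : k = i
  · subst h1; simp [wvec, hij]; norm_num
  · by_cases h2 : k = j
    · subst h2; simp [wvec, h1, Complex.conj_ofNat]; norm_num
    · simp [wvec, h1, h2]

lemma refl_off_ne_zero {i j : Fin n} (hij : i ≠ j) : refl i j 1 j i ≠ 0 := by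
  rw [refl_apply]
  simp [wvec, hij, hij.symm]

/-! ### Diagonal matrix units -/

/-- `K` is monomial after conjugation by `U ⊗ conj U` for every unitary `U`. -/
def AllMono (K : Matrix (Fin n × Fin n) (Fin n × Fin n) ℂ) : Prop :=
  ∀ U ∈ Matrix.unitaryGroup (Fin n) ℂ, IsMonomial (adj U * K * (adj U)ᴴ)

lemma AllMono.conj {K : Matrix (Fin n × Fin n) (Fin n × Fin n) ℂ} (hK : AllMono K)
    {W : Matrix (Fin n) (Fin n) ℂ} (hW : W ∈ Matrix.unitaryGroup (Fin n) ℂ) :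
    AllMono (adj W * K * (adj W)ᴴ) := by
  intro U hU
  have h := hK (U * W) (mul_mem hU hW)
  rw [adj_mul, Matrix.conjTranspose_mul] at h
  simpa only [Matrix.mul_assoc] using h

lemma exists_third (hn : 3 ≤ n) (i k : Fin n) : ∃ m, m ≠ i ∧ m ≠ k := by
  have h : ({i, k} : Finset (Fin n)).card < Fintype.card (Fin n) := by
    rw [Fintype.card_fin]
    exact lt_of_le_of_lt Finset.card_le_two (by omega)
  obtain ⟨m, hm⟩ := Finset.exists_mem_notMem_of_card_lt_card (s := {i, k})
    (t := Finset.univ) (by simpa using h)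
  refine ⟨m, ?_, ?_⟩ <;> rintro rfl <;> simp at hm

/-- A reflection in a coordinate plane orthogonal to `eᵢ` fixes `Eᵢᵢ`, so conjugating `K`
by it applies it to the image of `Eᵢᵢ`, here a multiple of the matrix unit with index `p₀`. -/
lemma conj_refl_column {K : Matrix (Fin n × Fin n) (Fin n × Fin n) ℂ} {i k m : Fin n}
    (hk : k ≠ i) (hm : m ≠ i) {p₀ : Fin n × Fin n} (hp : ∀ p, p ≠ p₀ → K p (i, i) = 0)
    (q : Fin n × Fin n) :
    (adj (refl k m 1) * K * (adj (refl k m 1))ᴴ) q (i, i) =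
      adj (refl k m 1) q p₀ * K p₀ (i, i) := by
  have hw : wvec k m 1 i = 0 := by simp [wvec, hk.symm, hm.symm]
  have hcol : ∀ r, adj (refl k m 1) r (i, i) = if r = (i, i) then 1 else 0 := by
    rintro ⟨r, s⟩
    by_cases hr : r = i <;> by_cases hs : s = i <;> simp [adj_apply, refl_apply, hw, hr, hs]
  rw [adj_conjTranspose, refl_conjTranspose, Matrix.mul_apply]
  simp only [hcol, mul_ite, mul_one, mul_zero, Finset.sum_ite_eq', Finset.mem_univ, if_true]
  rw [Matrix.mul_apply, Finset.sum_eq_single p₀]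
  · intro p _ h; rw [hp p h, mul_zero]
  · simp

/-- The projection `Eᵢᵢ` is mapped to a multiple of itself. -/
lemma diag_column (hn : 3 ≤ n) {K : Matrix (Fin n × Fin n) (Fin n × Fin n) ℂ} (hK : AllMono K)
    (i : Fin n) (p : Fin n × Fin n) (hp : p ≠ (i, i)) : K p (i, i) = 0 := by
  have h1 := (hK 1 (one_mem _)).2 (i, i)
  simp only [adj_one, Matrix.conjTranspose_one, one_mul, mul_one] at h1
  obtain ⟨⟨k, l⟩, hne, huniq⟩ := h1
  have hz : ∀ p, p ≠ (k, l) → K p (i, i) = 0 := fun p h => by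
    by_contra h'
    exact h (huniq p h')
  have hb : (starRingEnd ℂ) (1 : ℂ) * 1 = 1 := by simp
  have hk : k = i := by
    by_contra hk
    obtain ⟨m, hmi, hmk⟩ := exists_third hn i k
    have hkm : k ≠ m := Ne.symm hmk
    have hu := (hK _ (refl_mem hkm hb)).2 (i, i)
    have e := hu.unique (y₁ := (k, l)) (y₂ := (m, l))
      (by rw [conj_refl_column hk hmi hz, adj_apply]
          exact mul_ne_zero (mul_ne_zero (refl_diag_ne_zero hkm _)
            ((map_ne_zero _).2 (refl_diag_ne_zero hkm _))) hne)
      (by rw [conj_refl_column hk hmi hz, adj_apply]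
          exact mul_ne_zero (mul_ne_zero (refl_off_ne_zero hkm)
            ((map_ne_zero _).2 (refl_diag_ne_zero hkm _))) hne)
    exact hkm (congrArg Prod.fst e)
  have hl : l = i := by
    by_contra hl
    obtain ⟨m, hmi, hml⟩ := exists_third hn i l
    have hlm : l ≠ m := Ne.symm hml
    have hu := (hK _ (refl_mem hlm hb)).2 (i, i)
    have e := hu.unique (y₁ := (k, l)) (y₂ := (k, m))
      (by rw [conj_refl_column hl hmi hz, adj_apply]
          exact mul_ne_zero (mul_ne_zero (refl_diag_ne_zero hlm _)
            ((map_ne_zero _).2 (refl_diag_ne_zero hlm _))) hne)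
      (by rw [conj_refl_column hl hmi hz, adj_apply]
          exact mul_ne_zero (mul_ne_zero (refl_diag_ne_zero hlm _)
            ((map_ne_zero _).2 (refl_off_ne_zero hlm))) hne)
    exact hlm (congrArg Prod.snd e)
  subst hk hl
  exact hz p hp

/-! ### Comparison of eigenvalues -/

/-- The matrix `25 u u†` for `u = (3 eᵢ - 4 b eⱼ) / 5`, as a vector of entries. -/
noncomputable def xvec (i j : Fin n) (b : ℂ) (p : Fin n × Fin n) : ℂ :=
  9 * (if p = (i, i) then 1 else 0) + 16 * (if p = (j, j) then 1 else 0)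
    - 12 * ((starRingEnd ℂ) b * (if p = (i, j) then 1 else 0) + b * (if p = (j, i) then 1 else 0))

lemma adj_refl_column {i j : Fin n} (hij : i ≠ j) {b : ℂ} (hb : (starRingEnd ℂ) b * b = 1)
    (p : Fin n × Fin n) : 25 * adj (refl i j b) p (i, i) = xvec i j b p := by
  have hcol : ∀ k, refl i j b k i =
      3 / 5 * (if k = i then 1 else 0) - 4 / 5 * b * (if k = j then 1 else 0) := by
    intro k
    rw [refl_apply]
    simp only [wvec, hij, if_true, if_false]
    split_ifs <;> simp <;> ring
  obtain ⟨k, l⟩ := p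
  simp only [adj_apply, hcol, xvec, Prod.mk.injEq]
  by_cases h1 : k = i <;> by_cases h2 : k = j <;> by_cases h3 : l = i <;> by_cases h4 : l = j <;>
    simp_all [Complex.conj_ofNat]
  all_goals try ring1
  all_goals linear_combination 16 * hb

/-- The rank-one matrix `(3 eᵢ - 4 b eⱼ)(3 eᵢ - 4 b eⱼ)†` is an eigenvector; the left-hand side is
`K` applied to it. -/
lemma eigen_eq (hn : 3 ≤ n) {K : Matrix (Fin n × Fin n) (Fin n × Fin n) ℂ} (hK : AllMono K)
    {i j : Fin n} (hij : i ≠ j) {b : ℂ} (hb : (starRingEnd ℂ) b * b = 1) :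
    ∃ μ : ℂ, ∀ p, 9 * K p (i, i) + 16 * K p (j, j)
      - 12 * ((starRingEnd ℂ) b * K p (i, j) + b * K p (j, i)) = μ * xvec i j b p := by
  set V := adj (refl i j b) with hV
  have hVV : V * V = 1 := by rw [hV, ← adj_mul, refl_mul_self hij hb, adj_one]
  have hVs : Vᴴ = V := by rw [hV, adj_conjTranspose, refl_conjTranspose]
  have hd := diag_column hn (hK.conj (refl_mem hij hb)) i
  rw [← hV, hVs] at hd
  refine ⟨(V * K * V) (i, i) (i, i), fun p => ?_⟩
  have h1 : (K * V) p (i, i) = V p (i, i) * (V * K * V) (i, i) (i, i) := by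
    have : K * V = V * (V * K * V) := by
      rw [Matrix.mul_assoc V K V, ← Matrix.mul_assoc V V, hVV, one_mul]
    rw [this, Matrix.mul_apply, Finset.sum_eq_single (i, i)]
    · intro q _ hq; rw [hd q hq, mul_zero]
    · simp
  have h2 : 25 * (K * V) p (i, i) = 9 * K p (i, i) + 16 * K p (j, j)
      - 12 * ((starRingEnd ℂ) b * K p (i, j) + b * K p (j, i)) := by
    rw [Matrix.mul_apply, Finset.mul_sum]
    have : ∀ q, 25 * (K p q * V q (i, i)) = K p q * xvec i j b q := fun q => by
      rw [← adj_refl_column hij hb]; ring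
    simp only [this, xvec, mul_sub, mul_add, Finset.sum_sub_distrib, Finset.sum_add_distrib,
      mul_ite, mul_one, mul_zero, Finset.sum_ite_eq', Finset.mem_univ, if_true]
    ring
  rw [← h2, h1, ← adj_refl_column hij hb]
  ring

/-- All of `Eᵢᵢ`, `Eⱼⱼ`, `Eᵢⱼ` are eigenvectors for one eigenvalue. -/
lemma pair_eq (hn : 3 ≤ n) {K : Matrix (Fin n × Fin n) (Fin n × Fin n) ℂ} (hK : AllMono K)
    {i j : Fin n} (hij : i ≠ j) :
    K (j, j) (j, j) = K (i, i) (i, i) ∧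
      ∀ p, K p (i, j) = K (i, i) (i, i) * (if p = (i, j) then 1 else 0) := by
  have hji := hij.symm
  obtain ⟨a, ha⟩ := eigen_eq hn hK hij (b := 1) (by simp)
  obtain ⟨a', ha'⟩ := eigen_eq hn hK hij (b := -1) (by simp)
  obtain ⟨c, hc⟩ := eigen_eq hn hK hij (b := Complex.I) (by simp)
  obtain ⟨c', hc'⟩ := eigen_eq hn hK hij (b := -Complex.I) (by simp)
  have dI := diag_column hn hK i
  have dJ := diag_column hn hK j
  simp only [xvec, map_neg, map_one, Complex.conj_I] at ha ha' hc hc'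
  have zi : K (i, j) (i, i) = 0 := dI _ (by simp [hji])
  have zj : K (i, j) (j, j) = 0 := dJ _ (by simp [hij])
  have zij : K (i, i) (j, j) = 0 := dJ _ (by simp [hij])
  have zji : K (j, j) (i, i) = 0 := dI _ (by simp [hji])
  -- In row `(i, j)` the columns `(i, i)` and `(j, j)` vanish, so the left-hand side is odd in `b`,
  -- as is `xvec`; hence `b` and `-b` have the same eigenvalue.
  have e1 : a = a' := by
    have h := ha (i, j)
    have h' := ha' (i, j)
    simp [hij, hji, zi, zj] at h h'
    linear_combination (-1 / 12) * h + (1 / 12) * h'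
  have e2 : c = c' := by
    have h := hc (i, j)
    have h' := hc' (i, j)
    simp [hij, hji, zi, zj] at h h'
    have h0 : Complex.I * (c - c') = 0 := by linear_combination (-1 / 12) * h + (1 / 12) * h'
    exact sub_eq_zero.1 ((mul_eq_zero.1 h0).resolve_left Complex.I_ne_zero)
  subst e1 e2
  -- Adding the equations for `b` and `-b` cancels the columns `(i, j)` and `(j, i)`.
  have f1 : K (i, i) (i, i) = a := by
    have h := ha (i, i)
    have h' := ha' (i, i)
    simp [hij, zij] at h h'
    linear_combination (1 / 18) * h + (1 / 18) * h'
  have f2 : K (i, i) (i, i) = c := by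
    have h := hc (i, i)
    have h' := hc' (i, i)
    simp [hij, zij] at h h'
    linear_combination (1 / 18) * h + (1 / 18) * h'
  have f3 : K (j, j) (j, j) = a := by
    have h := ha (j, j)
    have h' := ha' (j, j)
    simp [hji, zji] at h h'
    linear_combination (1 / 32) * h + (1 / 32) * h'
  refine ⟨by rw [f3, f1], fun p => ?_⟩
  have hac : c = a := by rw [← f2, f1]
  subst hac
  rw [f1]
  -- The combination of `b = 1, -1, I, -I` with weights proportional to `b` isolates the column `(i, j)`.
  have h1 := ha p
  have h2 := ha' p
  have h3 := hc p
  have h4 := hc' p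
  linear_combination (-1 / 48) * h1 + (1 / 48) * h2 + (-Complex.I / 48) * h3
    + (Complex.I / 48) * h4 + (1 / 2) * (K p (i, j) - K p (j, i)
      - c * (if p = (i, j) then 1 else 0) + c * (if p = (j, i) then 1 else 0)) * Complex.I_sq

end Stmt9

/-- if `(U ⊗ conj U) K (U ⊗ conj U)†` is monomial for every unitary `U ∈ U(n)`
with `n ≥ 3`, then `K` is a scalar multiple of the identity. -/
theorem stmt9 {n : ℕ} (hn : 3 ≤ n) (K : Matrix (Fin n × Fin n) (Fin n × Fin n) ℂ)
    (hK : ∀ U ∈ Matrix.unitaryGroup (Fin n) ℂ,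
      IsMonomial ((U ⊗ₖ U.map (starRingEnd ℂ)) * K * (U ⊗ₖ U.map (starRingEnd ℂ))ᴴ)) :
    ∃ lam : ℂ, K = lam • (1 : Matrix (Fin n × Fin n) (Fin n × Fin n) ℂ) := by
  have hK' : Stmt9.AllMono K := hK
  let o : Fin n := ⟨0, by omega⟩
  have hdiag : ∀ i, K (i, i) (i, i) = K (o, o) (o, o) := by
    intro i
    by_cases h : o = i
    · rw [h]
    · exact (Stmt9.pair_eq hn hK' h).1
  refine ⟨K (o, o) (o, o), ?_⟩
  ext p ⟨i, j⟩
  rw [Matrix.smul_apply, Matrix.one_apply, smul_eq_mul]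
  by_cases hij : i = j
  · subst hij
    by_cases hp : p = (i, i)
    · subst hp; simp [hdiag]
    · rw [Stmt9.diag_column hn hK' i p hp]; simp [hp]
  · rw [(Stmt9.pair_eq hn hK' hij).2 p, hdiag]
end

section
/- Let n ≥ 2 and let A be an n×n complex matrix such that U·A·U† is a monomial matrix for every unitary U ∈ U(n). Then there exists λ ∈ ℂ, λ ≠ 0, such that A = λ · I. -/
/-!
The proof looks at the `2 × 2` principal blocks of `A`. Fix `i ≠ j` and conjugate `A` by a unitary
rotation in the plane of the `i`-th and `j`-th coordinates. The corresponding block of the result is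
the rotated block of `A`, and since the result is monomial, either both diagonal entries of this
block vanish or both off-diagonal entries do (`IsMonomial.block`). Apply this to three rotations:
the identity, the real rotation with cosine `3/5` and sine `4/5`, and its twist with sine `4/5 * I`.

* If the block of `A` is `diag(p, s)`, the real rotation has off-diagonal entries proportional to
  `p - s` and diagonal entries `(9p + 16s)/25`, `(16p + 9s)/25`; either alternative gives `p = s`.
* If the block of `A` is antidiagonal with entries `q, r`, the real rotation has diagonal entries
  proportional to `q + r` and off-diagonal entries `(9q - 16r)/25`, `(9r - 16q)/25`, so either
  alternative gives `q + r = 0`, and the second one even `q = r = 0`. The twisted rotation has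
  diagonal entries proportional to `q - r` and one off-diagonal entry `(9q + 16r)/25`; the vanishing
  of either one, together with `q + r = 0`, gives `q = r = 0`.

So every block is scalar (`block_scalar`), hence `A` is scalar, and it is nonzero because `A` itself
is monomial.
-/

open scoped Matrix Kronecker

/-- The matrix acting on the span of the `i`-th and `j`-th basis vectors by
`!![c, s; -star s, c]` and as the identity on the remaining ones. -/
def planeRot {n : ℕ} (i j : Fin n) (c s : ℂ) : Matrix (Fin n) (Fin n) ℂ := fun k l =>
  if k = i then (if l = i then c else 0) + (if l = j then s else 0)
  else if k = j then (if l = i then -star s else 0) + (if l = j then c else 0)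
  else if l = k then 1 else 0

section planeRot

variable {n : ℕ} {i j : Fin n} {c s : ℂ}

lemma sum_planeRot_left (f : Fin n → ℂ) :
    ∑ l, planeRot i j c s i l * f l = c * f i + s * f j := by
  simp [planeRot, add_mul, Finset.sum_add_distrib]

lemma sum_planeRot_right (hij : i ≠ j) (f : Fin n → ℂ) :
    ∑ l, planeRot i j c s j l * f l = -star s * f i + c * f j := by
  simp [planeRot, hij.symm, add_mul, Finset.sum_add_distrib]

lemma sum_planeRot_other {k : Fin n} (hi : k ≠ i) (hj : k ≠ j) (f : Fin n → ℂ) :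
    ∑ l, planeRot i j c s k l * f l = f k := by
  simp [planeRot, hi, hj]

lemma planeRot_mem (hij : i ≠ j) (hc : star c = c) (h : c * c + s * star s = 1) :
    planeRot i j c s ∈ Matrix.unitaryGroup (Fin n) ℂ := by
  rw [Matrix.mem_unitaryGroup_iff]
  ext k l
  rw [Matrix.mul_apply]
  simp only [Matrix.star_apply]
  have hc' : (starRingEnd ℂ) c = c := hc
  have h' : c * c + s * (starRingEnd ℂ) s = 1 := h
  by_cases hki : k = i
  · subst hki
    rw [sum_planeRot_left]
    by_cases hl : l = k
    · subst hl; simp [planeRot, hij, hij.symm, hc', h']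
    by_cases hl' : l = j
    · subst hl'; simp [planeRot, hij, hij.symm, hc']; ring
    simp [planeRot, hl, hl', Ne.symm hl, Ne.symm hl']
  by_cases hkj : k = j
  · subst hkj
    rw [sum_planeRot_right hij]
    by_cases hl : l = k
    · subst hl; simp [planeRot, hij, hij.symm, hc']; linear_combination h'
    by_cases hl' : l = i
    · subst hl'; simp [planeRot, hij, hij.symm, hc']; ring
    simp [planeRot, hl, hl', Ne.symm hl, Ne.symm hl']
  rw [sum_planeRot_other hki hkj]
  by_cases hl : l = i
  · subst hl; simp [planeRot, hki, hkj]
  by_cases hl' : l = j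
  · subst hl'; simp [planeRot, hki, hkj]
  by_cases hlk : l = k
  · subst hlk; simp [planeRot, hki, hkj]
  simp [planeRot, hl, hl', Ne.symm hlk]

/-- An entry of `U * A * Uᴴ` in the form `∑ m, U l m * f m`, nested twice, to which the
`sum_planeRot` lemmas apply. -/
lemma conj_apply (U A : Matrix (Fin n) (Fin n) ℂ) (k l : Fin n) :
    (U * A * Uᴴ) k l = star (∑ m, U l m * star (∑ p, U k p * A p m)) := by
  simp [Matrix.mul_apply, mul_comm]

end planeRot

/-- A nonzero diagonal entry excludes a nonzero entry elsewhere in its row or column, so a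
`2 × 2` principal block of a monomial matrix is antidiagonal or diagonal (possibly with zeros). -/
lemma IsMonomial.block {n : ℕ} {M : Matrix (Fin n) (Fin n) ℂ} (hM : IsMonomial M) {i j : Fin n}
    (hij : i ≠ j) : (M i i = 0 ∧ M j j = 0) ∨ (M i j = 0 ∧ M j i = 0) := by
  have row : ∀ k, M k i = 0 ∨ M k j = 0 := fun k => by
    by_contra! h
    exact hij ((hM.1 k).unique h.1 h.2)
  have col : ∀ k, M i k = 0 ∨ M j k = 0 := fun k => by
    by_contra! h
    exact hij ((hM.2 k).unique h.1 h.2)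
  have := row i
  have := row j
  have := col i
  have := col j
  tauto

/-- The dichotomy `IsMonomial.block` for the conjugate of `A` by `planeRot i j c s`, with the four
entries of the rotated block written out. -/
lemma block_rot {n : ℕ} (A : Matrix (Fin n) (Fin n) ℂ)
    (hA : ∀ U ∈ Matrix.unitaryGroup (Fin n) ℂ, IsMonomial (U * A * Uᴴ)) {i j : Fin n}
    (hij : i ≠ j) {c s : ℂ} (hc : star c = c) (h : c * c + s * star s = 1) :
    (c * (c * A i i + s * A j i) + star s * (c * A i j + s * A j j) = 0 ∧
      -s * (-star s * A i i + c * A j i) + c * (-star s * A i j + c * A j j) = 0) ∨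
    (-s * (c * A i i + s * A j i) + c * (c * A i j + s * A j j) = 0 ∧
      c * (-star s * A i i + c * A j i) + star s * (-star s * A i j + c * A j j) = 0) := by
  have := (hA _ (planeRot_mem hij hc h)).block hij
  simp only [conj_apply, sum_planeRot_left, sum_planeRot_right hij] at this
  simpa only [star_add, star_mul', star_neg, star_star, hc] using this

lemma block_scalar {n : ℕ} (A : Matrix (Fin n) (Fin n) ℂ)
    (hA : ∀ U ∈ Matrix.unitaryGroup (Fin n) ℂ, IsMonomial (U * A * Uᴴ)) {i j : Fin n}
    (hij : i ≠ j) : A i j = 0 ∧ A i i = A j j := by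
  -- `h1`, `h2`, `h3` come from the identity, the real rotation and the twisted rotation.
  have h1 := (hA 1 (one_mem _)).block hij
  simp only [one_mul, Matrix.conjTranspose_one, mul_one] at h1
  have hc : star (3 / 5 : ℂ) = 3 / 5 := by simp
  have hs : star (4 / 5 : ℂ) = 4 / 5 := by simp
  have ht : star (4 / 5 * Complex.I : ℂ) = -(4 / 5 * Complex.I) := by simp
  have h2 := block_rot A hA hij (s := 4 / 5) hc (by rw [hs]; norm_num)
  have h3 := block_rot A hA hij (s := 4 / 5 * Complex.I) hc
    (by rw [ht]; linear_combination (-16 / 25) * Complex.I_mul_I)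
  rw [hs] at h2
  rw [ht] at h3
  rcases h1 with ⟨hi, hj⟩ | ⟨hi, hj⟩
  · rw [hi, hj] at h2 h3 ⊢
    refine ⟨?_, rfl⟩
    rcases h2 with ⟨h, -⟩ | ⟨h, h'⟩
    · rcases h3 with ⟨k, -⟩ | ⟨k, k'⟩
      · have e : A j i - A i j = 0 := by
          linear_combination (-25 / 12 * Complex.I) * k +
            (A j i - A i j) * Complex.I_mul_I
        linear_combination (25 / 24) * h - e / 2
      · linear_combination (100 / 21) * h - (25 / 7) * k - (16 / 7) * A j i * Complex.I_mul_I
    · linear_combination (-9 / 7) * h - (16 / 7) * h'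
  · rw [hi, hj] at h2
    refine ⟨hi, ?_⟩
    rcases h2 with ⟨h, h'⟩ | ⟨h, -⟩
    · linear_combination (-25 / 7) * h + (25 / 7) * h'
    · linear_combination (-25 / 12) * h

/-- if `U A U†` is monomial for every unitary `U ∈ U(n)` with `n ≥ 2`, then
`A = λ I` for some nonzero `λ ∈ ℂ`. -/
theorem stmt10 {n : ℕ} (hn : 2 ≤ n) (A : Matrix (Fin n) (Fin n) ℂ)
    (hA : ∀ U ∈ Matrix.unitaryGroup (Fin n) ℂ, IsMonomial (U * A * Uᴴ)) :
    ∃ lam : ℂ, lam ≠ 0 ∧ A = lam • (1 : Matrix (Fin n) (Fin n) ℂ) := by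
  have key : A = A ⟨0, by omega⟩ ⟨0, by omega⟩ • (1 : Matrix (Fin n) (Fin n) ℂ) := by
    ext k l
    by_cases hkl : k = l
    · subst hkl
      by_cases hk : k = ⟨0, by omega⟩
      · simp [← hk]
      · simpa using (block_scalar A hA hk).2
    · simpa [hkl] using (block_scalar A hA hkl).1
  refine ⟨_, fun h0 => ?_, key⟩
  have hM := hA 1 (one_mem _)
  simp only [one_mul, Matrix.conjTranspose_one, mul_one] at hM
  obtain ⟨l, hl, -⟩ := hM.1 ⟨0, by omega⟩
  rw [h0, zero_smul] at key
  exact hl (by rw [key]; rfl)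
end

section
/- Let n ≥ 3. There is no nonzero n×n complex matrix V with the property that for every unitary U ∈ U(n) there exists λ ∈ ℂ such that U·V·Uᵀ = λ·V. (In particular, no unitary V can satisfy this, so the modular representation of a theory equivalent to its time-reversal cannot be universal.) -/
/-!
If `V a b ≠ 0`, choose an index `c` outside `{a, b}`. The diagonal unitary with entry `I` at `c` and
`1` elsewhere fixes the entry `V a b`, so its scalar is `1`; on the row of `c` it multiplies entries
by `I` or `-1`, so that row vanishes. The permutation matrix of the transposition `(a c)` carries an
entry of row `c` to the position `(a, b)` up to a scalar, whence `V a b = 0`.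
-/

open scoped Matrix

/-- for `n ≥ 3` there is no nonzero `n × n` complex matrix `V` such that for
every unitary `U ∈ U(n)` there exists `λ ∈ ℂ` with `U V Uᵀ = λ V`. -/
theorem stmt13 {n : ℕ} (hn : 3 ≤ n) :
    ¬ ∃ V : Matrix (Fin n) (Fin n) ℂ, V ≠ 0 ∧
        ∀ U ∈ Matrix.unitaryGroup (Fin n) ℂ, ∃ lam : ℂ, U * V * Uᵀ = lam • V := by
  rintro ⟨V, hV, h⟩
  apply hV
  ext a b
  by_contra hab
  rw [Matrix.zero_apply] at hab
  obtain ⟨c, hc⟩ : ∃ c, c ∉ ({a, b} : Finset (Fin n)) := by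
    by_contra! hall
    have h1 := Finset.card_le_card (fun x _ => hall x : Finset.univ ⊆ ({a, b} : Finset (Fin n)))
    have h2 := Finset.card_le_two (a := a) (b := b)
    rw [Finset.card_univ, Fintype.card_fin] at h1
    omega
  simp only [Finset.mem_insert, Finset.mem_singleton, not_or] at hc
  obtain ⟨hca, hcb⟩ := hc
  have row : ∀ j, V c j = 0 := by
    intro j
    obtain ⟨lam, hl⟩ := h (Matrix.diagonal fun i => if i = c then Complex.I else 1) (by
      rw [Matrix.mem_unitaryGroup_iff, Matrix.star_eq_conjTranspose,
        Matrix.diagonal_conjTranspose, Matrix.diagonal_mul_diagonal, ← Matrix.diagonal_one]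
      congr 1
      ext i
      by_cases hi : i = c <;> simp [hi])
    have entry : ∀ i j, (if i = c then Complex.I else 1) * V i j *
        (if j = c then Complex.I else 1) = lam * V i j := by
      intro i j
      simpa [Matrix.diagonal_transpose, Matrix.mul_diagonal, Matrix.diagonal_mul] using
        congrFun (congrFun hl i) j
    have hlam : lam = 1 := by
      have e := entry a b
      rw [if_neg (Ne.symm hca), if_neg (Ne.symm hcb), one_mul, mul_one] at e
      exact mul_right_cancel₀ hab (by rw [← e, one_mul])
    have e := entry c j
    rw [hlam, if_pos rfl, one_mul] at e
    by_contra hj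
    split_ifs at e
    · have e' : Complex.I * Complex.I = 1 :=
        mul_right_cancel₀ hj (by linear_combination e)
      norm_num [Complex.ext_iff] at e'
    · have e' : Complex.I = 1 := mul_right_cancel₀ hj (by linear_combination e)
      norm_num [Complex.ext_iff] at e'
  obtain ⟨lam, hl⟩ := h ((Equiv.swap a c).permMatrix ℂ) (by
    rw [Matrix.mem_unitaryGroup_iff, Matrix.star_eq_conjTranspose,
      Matrix.conjTranspose_permMatrix, ← Matrix.permMatrix_mul]
    simp)
  have e := congrFun (congrFun hl c) (Equiv.swap a c b)
  rw [Matrix.smul_apply, row, smul_zero, Matrix.transpose_permMatrix,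
    Equiv.Perm.permMatrix, Equiv.Perm.permMatrix, PEquiv.toMatrix_toPEquiv_mul,
    PEquiv.mul_toMatrix_toPEquiv] at e
  simp at e
  exact hab e
end
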